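/- Assume 0 ≤ α < N, p, q > 0, s > 1, ρ > 0, and that the Dirichlet eigenpair hypothesis holds for (Ω, λ₁, φ). If μ > C_{H,Ω} = λ₁ + ((N−2)/2)², then the system (S): −Δu − μ|x|^{−2}u ≥ (|x|^{−α} * v^p) v^q, −Δv − μ|x|^{−2}v ≥ u^s has no positive solution in C_Ω^ρ. -/

import Mathlib

open MeasureTheory Real Set
open scoped ENNReal NNReal

noncomputable section

/-- Euclidean space `ℝ^N`. -/
abbrev Euc (N : ℕ) := EuclideanSpace ℝ (Fin N)

/-- The Euclidean Laplacian `Δu(x) = ∑ ∂²u/∂xᵢ²(x)`, the trace of the Hessian. -/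
def lap (N : ℕ) (u : Euc N → ℝ) (x : Euc N) : ℝ :=
  ∑ i : Fin N,
    iteratedFDeriv ℝ 2 u x ![EuclideanSpace.single i 1, EuclideanSpace.single i 1]

/-- The open cone `C_Ω^ρ = {x : |x| > ρ, x/|x| ∈ Ω}`. -/
def coneGT (N : ℕ) (ρ : ℝ) (Ω : Set (Euc N)) : Set (Euc N) :=
  {x | ρ < ‖x‖ ∧ ‖x‖⁻¹ • x ∈ Ω}

/-- The full open cone `C_Ω = {x ≠ 0 : x/|x| ∈ Ω}`. -/
def cone (N : ℕ) (Ω : Set (Euc N)) : Set (Euc N) :=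
  {x | x ≠ 0 ∧ ‖x‖⁻¹ • x ∈ Ω}

/-- `Ω` is a nonempty, connected, relatively open subset of the unit sphere `S^{N-1}`. -/
def IsConeDomain (N : ℕ) (Ω : Set (Euc N)) : Prop :=
  Ω ⊆ Metric.sphere (0 : Euc N) 1 ∧ IsConnected Ω ∧
    IsOpen {ω : Metric.sphere (0 : Euc N) 1 | (ω : Euc N) ∈ Ω}

/-- The convolution `(|x|^{-α} * f)(x) = ∫_{C_Ω^ρ} f(y)|x-y|^{-α} dy`, valued in `[0,∞]`. -/
def rieszConv (N : ℕ) (α ρ : ℝ) (Ω : Set (Euc N)) (f : Euc N → ℝ) (x : Euc N) : ℝ≥0∞ :=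
  ∫⁻ y in coneGT N ρ Ω, ENNReal.ofReal (f y * ‖x - y‖ ^ (-α))

/-- Dirichlet eigenpair hypothesis for `(Ω, λ₁, φ)`: `φ` is continuous on the closure of `Ω`,
positive on `Ω`, vanishing on the relative boundary, with maximum `1`, and its 0-homogeneous
extension `Φ(x) = φ(x/|x|)` is `C²` on the open cone and satisfies `ΔΦ = -λ₁|x|⁻²Φ`. -/
structure DirichletEigenpair (N : ℕ) (Ω : Set (Euc N)) (lam1 : ℝ) (φ : Euc N → ℝ) : Prop where
  contOn : ContinuousOn φ (closure Ω)
  pos : ∀ ω ∈ Ω, 0 < φ ω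
  bdryZero : ∀ ω ∈ closure Ω \ Ω, φ ω = 0
  le_one : ∀ ω ∈ closure Ω, φ ω ≤ 1
  max_one : ∃ ω ∈ closure Ω, φ ω = 1
  smoothExt : ContDiffOn ℝ 2 (fun x => φ (‖x‖⁻¹ • x)) (cone N Ω)
  eigen : ∀ x ∈ cone N Ω,
    lap N (fun y => φ (‖y‖⁻¹ • y)) x = -lam1 * ‖x‖ ^ (-(2:ℝ)) * φ (‖x‖⁻¹ • x)

/-- The Hardy constant `C_{H,Ω} = λ₁ + ((N-2)/2)²`. -/
def CHconst (N : ℕ) (lam1 : ℝ) : ℝ := lam1 + (((N : ℝ) - 2) / 2) ^ 2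

/-- The smaller root `γ_*` of `γ(γ + N - 2) = λ₁ - μ`. -/
def gammaStar (N : ℕ) (lam1 μ : ℝ) : ℝ :=
  (-((N : ℝ) - 2) - Real.sqrt (((N : ℝ) - 2) ^ 2 + 4 * (lam1 - μ))) / 2

/-- A positive (classical) solution of `(E) : -Δu - μ|x|⁻²u ≥ (|x|^{-α} * uᵖ) u^q` in `C_Ω^ρ`. -/
def IsPosSolE (N : ℕ) (ρ μ α p q : ℝ) (Ω : Set (Euc N)) (u : Euc N → ℝ) : Prop :=
  ContDiffOn ℝ 2 u (coneGT N ρ Ω) ∧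
  ContinuousOn u (closure (coneGT N ρ Ω)) ∧
  (∀ x ∈ coneGT N ρ Ω, 0 < u x) ∧
  (∀ x ∈ coneGT N ρ Ω, rieszConv N α ρ Ω (fun y => u y ^ p) x < ⊤) ∧
  (∀ x ∈ coneGT N ρ Ω,
    (rieszConv N α ρ Ω (fun y => u y ^ p) x).toReal * u x ^ q ≤
      -lap N u x - μ * ‖x‖ ^ (-(2:ℝ)) * u x)

/-- A positive solution of `(Z) : -Δu - μ|x|⁻²u ≥ (∫_{C_Ω^ρ} uᵖ) u^q` in `C_Ω^ρ`. -/
def IsPosSolZ (N : ℕ) (ρ μ p q : ℝ) (Ω : Set (Euc N)) (u : Euc N → ℝ) : Prop :=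
  ContDiffOn ℝ 2 u (coneGT N ρ Ω) ∧
  ContinuousOn u (closure (coneGT N ρ Ω)) ∧
  (∀ x ∈ coneGT N ρ Ω, 0 < u x) ∧
  (∫⁻ y in coneGT N ρ Ω, ENNReal.ofReal (u y ^ p)) < ⊤ ∧
  (∀ x ∈ coneGT N ρ Ω,
    (∫⁻ y in coneGT N ρ Ω, ENNReal.ofReal (u y ^ p)).toReal * u x ^ q ≤
      -lap N u x - μ * ‖x‖ ^ (-(2:ℝ)) * u x)

/-- A positive solution `(u, v)` of the system `(S)` in `C_Ω^ρ`. -/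
def IsPosSolS (N : ℕ) (ρ μ α p q s : ℝ) (Ω : Set (Euc N)) (u v : Euc N → ℝ) : Prop :=
  ContDiffOn ℝ 2 u (coneGT N ρ Ω) ∧ ContinuousOn u (closure (coneGT N ρ Ω)) ∧
  ContDiffOn ℝ 2 v (coneGT N ρ Ω) ∧ ContinuousOn v (closure (coneGT N ρ Ω)) ∧
  (∀ x ∈ coneGT N ρ Ω, 0 < u x) ∧ (∀ x ∈ coneGT N ρ Ω, 0 < v x) ∧
  (∀ x ∈ coneGT N ρ Ω, rieszConv N α ρ Ω (fun y => v y ^ p) x < ⊤) ∧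
  (∀ x ∈ coneGT N ρ Ω,
    (rieszConv N α ρ Ω (fun y => v y ^ p) x).toReal * v x ^ q ≤
      -lap N u x - μ * ‖x‖ ^ (-(2:ℝ)) * u x) ∧
  (∀ x ∈ coneGT N ρ Ω, u x ^ s ≤ -lap N v x - μ * ‖x‖ ^ (-(2:ℝ)) * v x)

/-!
Fix `ω > 0`. On the part of the cone where `T < log |x| < T + π / ω`, the function
`ψ(x) = |x|^{-(N-2)/2} sin (ω (log |x| - T)) φ(x/|x|)` is positive, vanishes at the lateral boundary
and at both ends, and solves `-Δψ = (C_{H,Ω} + ω²) |x|⁻² ψ`. In the system, `v` is a positive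
supersolution of `-Δ - μ |x|⁻²`, so testing its inequality with `w² / v` gives
`μ ∫ |x|⁻² w² ≤ ∫ |∇w|²` for every compactly supported `w`. Choosing for `w` a truncation of `ψ` at
height `ε` and letting `ε → 0` yields `μ ≤ C_{H,Ω} + ω²`; then `ω → 0`.
-/

open InnerProductSpace Laplacian Topology
open scoped Gradient

section Calculus

variable {E : Type*} [NormedAddCommGroup E] [InnerProductSpace ℝ E]
  {f g : E → ℝ} {h : ℝ → ℝ} {x : E}

lemma differentiableAt_fderiv_apply (hf : ContDiffAt ℝ 2 f x) (v : E) :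
    DifferentiableAt ℝ (fun y => fderiv ℝ f y v) x :=
  ((hf.fderiv_right (m := 1) le_rfl).differentiableAt one_ne_zero).clm_apply
    (differentiableAt_const v)

lemma fderiv_real_comp_apply (hh : DifferentiableAt ℝ h (f x)) (hf : DifferentiableAt ℝ f x)
    (v : E) : fderiv ℝ (fun y => h (f y)) x v = deriv h (f x) * fderiv ℝ f x v := by
  have hcomp := (hh.hasDerivAt.comp_hasFDerivAt x hf.hasFDerivAt).fderiv
  rw [Function.comp_def] at hcomp
  simp [hcomp]

section Gradient

variable [CompleteSpace E]

lemma eqOn_gradient_zero {U : Set E} (hU : IsOpen U) (hf : EqOn f 0 U) : EqOn (∇ f) 0 U :=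
  fun x hx => by
    rw [(hf.eventuallyEq_of_mem (hU.mem_nhds hx)).gradient_eq]
    simp [gradient]

lemma continuousOn_gradient {U : Set E} (hU : IsOpen U) (hf : ContDiffOn ℝ 1 f U) :
    ContinuousOn (∇ f) U :=
  (toDual ℝ E).symm.continuous.comp_continuousOn (hf.continuousOn_fderiv_of_isOpen hU le_rfl)

lemma gradient_mul (hf : DifferentiableAt ℝ f x) (hg : DifferentiableAt ℝ g x) :
    ∇ (fun y => f y * g y) x = f x • ∇ g x + g x • ∇ f x := by
  refine ext_inner_right ℝ fun y => ?_
  simp [inner_add_left, inner_smul_left, inner_gradient_left, fderiv_fun_mul hf hg]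

lemma gradient_comp (hh : DifferentiableAt ℝ h (f x)) (hf : DifferentiableAt ℝ f x) :
    ∇ (fun y => h (f y)) x = deriv h (f x) • ∇ f x := by
  refine ext_inner_right ℝ fun y => ?_
  simp [inner_smul_left, inner_gradient_left, fderiv_real_comp_apply hh hf]

lemma gradient_sq_div {w v : E → ℝ} (hw : DifferentiableAt ℝ w x)
    (hv : DifferentiableAt ℝ v x) (hvx : v x ≠ 0) :
    ∇ (fun y => w y ^ 2 / v y) x =
      (2 * (w x / v x)) • ∇ w x - (w x / v x) ^ 2 • ∇ v x := by
  simp only [div_eq_mul_inv]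
  rw [gradient_mul (hw.fun_pow 2) (hv.fun_inv hvx),
    gradient_comp (h := fun t => t ^ 2) (differentiableAt_pow 2) hw,
    gradient_comp (h := fun t => t⁻¹) (differentiableAt_inv hvx) hv, deriv_inv, deriv_pow_field]
  module

lemma inner_gradient_sq_div_le {w v : E → ℝ} (hw : DifferentiableAt ℝ w x)
    (hv : DifferentiableAt ℝ v x) (hvx : v x ≠ 0) :
    ⟪∇ (fun y => w y ^ 2 / v y) x, ∇ v x⟫_ℝ ≤ ‖∇ w x‖ ^ 2 := by
  have picone : ‖∇ w x - (w x / v x) • ∇ v x‖ ^ 2 =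
      ‖∇ w x‖ ^ 2 - ⟪∇ (fun y => w y ^ 2 / v y) x, ∇ v x⟫_ℝ := by
    rw [gradient_sq_div hw hv hvx, norm_sub_sq_real, norm_smul, mul_pow, norm_eq_abs, sq_abs,
      inner_sub_left, inner_smul_left, inner_smul_left, inner_smul_right,
      real_inner_self_eq_norm_sq]
    simp only [conj_trivial]
    ring
  exact sub_nonneg.1 (picone ▸ sq_nonneg _)

lemma sum_fderiv_mul_fderiv {ι : Type*} [Fintype ι] (b : OrthonormalBasis ι ℝ E) :
    ∑ i, fderiv ℝ f x (b i) * fderiv ℝ g x (b i) = ⟪∇ f x, ∇ g x⟫_ℝ := by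
  rw [← b.sum_inner_mul_inner]
  refine Finset.sum_congr rfl fun i _ => ?_
  rw [inner_gradient_left, real_inner_comm, inner_gradient_left]

end Gradient

variable [FiniteDimensional ℝ E]

lemma laplacian_eq_sum_fderiv_fderiv {ι : Type*} [Fintype ι] (b : OrthonormalBasis ι ℝ E)
    (hf : ContDiffAt ℝ 2 f x) :
    Δ f x = ∑ i, fderiv ℝ (fun y => fderiv ℝ f y (b i)) x (b i) := by
  have hdf : DifferentiableAt ℝ (fderiv ℝ f) x :=
    (hf.fderiv_right (m := 1) le_rfl).differentiableAt one_ne_zero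
  simp only [laplacian_eq_iteratedFDeriv_orthonormalBasis f b, iteratedFDeriv_two_apply,
    fderiv_clm_apply hdf (differentiableAt_const _)]
  simp

lemma continuousOn_laplacian {U : Set E} (hU : IsOpen U) (hg : ContDiffOn ℝ 2 g U) :
    ContinuousOn (Δ g) U := by
  have h : ContinuousOn (iteratedFDeriv ℝ 2 g) U :=
    (hg.continuousOn_iteratedFDerivWithin le_rfl hU.uniqueDiffOn).congr
      fun x hx => (iteratedFDerivWithin_of_isOpen 2 hU hx).symm
  rw [laplacian_eq_iteratedFDeriv_stdOrthonormalBasis]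
  exact continuousOn_finsetSum _ fun i _ =>
    (continuous_eval_const _).comp_continuousOn h

variable [CompleteSpace E]

lemma laplacian_mul (hf : ContDiffAt ℝ 2 f x) (hg : ContDiffAt ℝ 2 g x) :
    Δ (fun y => f y * g y) x = f x * Δ g x + 2 * ⟪∇ f x, ∇ g x⟫_ℝ + g x * Δ f x := by
  let b := stdOrthonormalBasis ℝ E
  have leibniz (v : E) : (fun y => fderiv ℝ (fun z => f z * g z) y v) =ᶠ[𝓝 x]
      fun y => f y * fderiv ℝ g y v + g y * fderiv ℝ f y v := by
    filter_upwards [hf.eventually (by simp), hg.eventually (by simp)] with y hfy hgy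
    simp [fderiv_fun_mul (hfy.differentiableAt two_ne_zero) (hgy.differentiableAt two_ne_zero)]
  rw [laplacian_eq_sum_fderiv_fderiv b (hf.mul hg), laplacian_eq_sum_fderiv_fderiv b hf,
    laplacian_eq_sum_fderiv_fderiv b hg, ← sum_fderiv_mul_fderiv b]
  simp only [Finset.mul_sum, ← Finset.sum_add_distrib]
  refine Finset.sum_congr rfl fun i _ => ?_
  have hf₁ := hf.differentiableAt two_ne_zero
  have hg₁ := hg.differentiableAt two_ne_zero
  have hf₂ := differentiableAt_fderiv_apply hf (b i)
  have hg₂ := differentiableAt_fderiv_apply hg (b i)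
  rw [(leibniz (b i)).fderiv_eq, fderiv_fun_add (hf₁.fun_mul hg₂) (hg₁.fun_mul hf₂),
    fderiv_fun_mul hf₁ hg₂, fderiv_fun_mul hg₁ hf₂]
  simp only [add_apply, smul_apply, smul_eq_mul]
  ring

lemma laplacian_comp (hh : ContDiffAt ℝ 2 h (f x)) (hf : ContDiffAt ℝ 2 f x) :
    Δ (fun y => h (f y)) x =
      deriv (deriv h) (f x) * ‖∇ f x‖ ^ 2 + deriv h (f x) * Δ f x := by
  let b := stdOrthonormalBasis ℝ E
  have chain (v : E) : (fun y => fderiv ℝ (fun z => h (f z)) y v) =ᶠ[𝓝 x]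
      fun y => deriv h (f y) * fderiv ℝ f y v := by
    filter_upwards [hf.continuousAt.eventually (hh.eventually (by simp)),
      hf.eventually (by simp)] with y hhy hfy
    exact fderiv_real_comp_apply (hhy.differentiableAt two_ne_zero)
      (hfy.differentiableAt two_ne_zero) v
  have hf₁ := hf.differentiableAt two_ne_zero
  have hh₂ := (hh.derivWithin (m := 1) le_rfl).differentiableAt one_ne_zero
  have hcomp : DifferentiableAt ℝ (fun y => deriv h (f y)) x := hh₂.comp x hf₁
  rw [laplacian_eq_sum_fderiv_fderiv b (hh.fun_comp x hf), laplacian_eq_sum_fderiv_fderiv b hf,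
    ← real_inner_self_eq_norm_sq, ← sum_fderiv_mul_fderiv b]
  simp only [Finset.mul_sum, ← Finset.sum_add_distrib]
  refine Finset.sum_congr rfl fun i _ => ?_
  rw [(chain (b i)).fderiv_eq,
    fderiv_fun_mul hcomp (differentiableAt_fderiv_apply hf (b i))]
  simp only [add_apply, smul_apply, smul_eq_mul, fderiv_real_comp_apply hh₂ hf₁]
  ring

end Calculus

section Integration

lemma contDiff_of_tsupport_subset {E : Type*} [NormedAddCommGroup E] [NormedSpace ℝ E]
    {f : E → ℝ} {U : Set E} {n : ℕ∞} (hU : IsOpen U) (hf : ContDiffOn ℝ n f U)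
    (hfU : tsupport f ⊆ U) : ContDiff ℝ n f := by
  refine contMDiff_iff_contDiff.1 (contMDiff_of_tsupport fun x hx => ?_)
  exact (hf.contDiffAt (hU.mem_nhds (hfU hx))).contMDiffAt

lemma integrableOn_of_eqOn_zero_diff_compact {X : Type*} [TopologicalSpace X] [T2Space X]
    [MeasurableSpace X] [OpensMeasurableSpace X] {μ : Measure X}
    [IsFiniteMeasureOnCompacts μ] {f : X → ℝ} {U K : Set X} (hU : IsOpen U) (hK : IsCompact K)
    (hKU : K ⊆ U) (hf : ContinuousOn f U) (h0 : EqOn f 0 (U \ K)) : IntegrableOn f U μ :=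
  ((hf.mono hKU).integrableOn_compact hK).of_forall_sdiff_eq_zero hU.measurableSet h0

lemma integrable_mul_of_tsupport_subset {X : Type*} [TopologicalSpace X] [MeasurableSpace X]
    [OpensMeasurableSpace X] {μ : Measure X} [IsFiniteMeasureOnCompacts μ] {f g : X → ℝ}
    {U : Set X} (hU : IsOpen U) (hf : Continuous f) (hfc : HasCompactSupport f)
    (hfU : tsupport f ⊆ U) (hg : ContinuousOn g U) : Integrable (fun x => f x * g x) μ :=
  ((hf.continuousOn.mul hg).continuous_of_tsupport_subset hU
    (tsupport_mul_subset_left.trans hfU)).integrable_of_hasCompactSupport hfc.mul_right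

variable {E : Type*} [NormedAddCommGroup E] [InnerProductSpace ℝ E] [FiniteDimensional ℝ E]
  [CompleteSpace E] [MeasurableSpace E] [BorelSpace E] {U : Set E}

lemma integral_mul_laplacian {f g : E → ℝ} (hU : IsOpen U) (hf : ContDiff ℝ 1 f)
    (hfc : HasCompactSupport f) (hfU : tsupport f ⊆ U) (hg : ContDiffOn ℝ 2 g U) :
    ∫ x, f x * Δ g x = -∫ x, ⟪∇ f x, ∇ g x⟫_ℝ := by
  let b := stdOrthonormalBasis ℝ E
  have hgx {x : E} (hx : x ∈ U) : ContDiffAt ℝ 2 g x := hg.contDiffAt (hU.mem_nhds hx)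
  have hg₁ : ContDiffOn ℝ 1 (fderiv ℝ g) U := hg.fderiv_of_isOpen hU le_rfl
  have hg₂ (v : E) : ContDiffOn ℝ 1 (fun x => fderiv ℝ g x v) U := hg₁.clm_apply contDiffOn_const
  have hg₃ (v : E) : ContinuousOn (fun x => fderiv ℝ (fun y => fderiv ℝ g y v) x v) U :=
    ((hg₂ v).continuousOn_fderiv_of_isOpen hU le_rfl).clm_apply continuousOn_const
  have int₁ (v : E) : Integrable fun x => fderiv ℝ f x v * fderiv ℝ g x v :=
    integrable_mul_of_tsupport_subset hU ((hf.continuous_fderiv one_ne_zero).clm_apply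
      continuous_const) (hfc.fderiv_apply ℝ v) ((tsupport_fderiv_apply_subset ℝ v).trans hfU)
      (hg₂ v).continuousOn
  have int₂ (v : E) : Integrable fun x => f x * fderiv ℝ (fun y => fderiv ℝ g y v) x v :=
    integrable_mul_of_tsupport_subset hU hf.continuous hfc hfU (hg₃ v)
  have parts (v : E) : ∫ x, f x * fderiv ℝ (fun y => fderiv ℝ g y v) x v =
      -∫ x, fderiv ℝ f x v * fderiv ℝ g x v :=
    integral_mul_fderiv_eq_neg_fderiv_mul_of_integrable (int₁ v) (int₂ v)
      (integrable_mul_of_tsupport_subset hU hf.continuous hfc hfU (hg₂ v).continuousOn)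
      (fun x _ => hf.differentiable one_ne_zero x)
      fun x hx => differentiableAt_fderiv_apply (hgx (hfU hx)) v
  calc ∫ x, f x * Δ g x
      = ∫ x, ∑ i, f x * fderiv ℝ (fun y => fderiv ℝ g y (b i)) x (b i) := by
        refine integral_congr_ae (.of_forall fun x => ?_)
        by_cases hx : x ∈ U
        · simp only [laplacian_eq_sum_fderiv_fderiv b (hgx hx), Finset.mul_sum]
        · simp [image_eq_zero_of_notMem_tsupport fun h => hx (hfU h)]
    _ = -∫ x, ∑ i, fderiv ℝ f x (b i) * fderiv ℝ g x (b i) := by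
        rw [integral_finsetSum _ fun i _ => int₂ (b i), integral_finsetSum _ fun i _ => int₁ (b i)]
        simp only [parts, Finset.sum_neg_distrib]
    _ = -∫ x, ⟪∇ f x, ∇ g x⟫_ℝ := by simp only [sum_fderiv_mul_fderiv b]

lemma setIntegral_mul_laplacian {f g : E → ℝ} {K : Set E} (hU : IsOpen U) (hK : IsCompact K)
    (hKU : K ⊆ U) (hf : ContDiffOn ℝ 1 f U) (h0 : EqOn f 0 (U \ K)) (hg : ContDiffOn ℝ 2 g U) :
    ∫ x in U, f x * Δ g x = -∫ x in U, ⟪∇ f x, ∇ g x⟫_ℝ := by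
  have hsupp : tsupport (U.indicator f) ⊆ K := by
    refine closure_minimal (fun x hx => ?_) hK.isClosed
    by_contra hxK
    exact hx (indicator_apply_eq_zero.2 fun hxU => h0 ⟨hxU, hxK⟩)
  have hind : ContDiff ℝ 1 (U.indicator f) :=
    contDiff_of_tsupport_subset hU (hf.congr (eqOn_indicator)) (hsupp.trans hKU)
  have hgrad : (fun x => ⟪∇ (U.indicator f) x, ∇ g x⟫_ℝ) =
      U.indicator fun x => ⟪∇ f x, ∇ g x⟫_ℝ := by
    ext x
    by_cases hx : x ∈ U
    · rw [indicator_of_mem hx,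
        (eqOn_indicator.eventuallyEq_of_mem (hU.mem_nhds hx)).gradient_eq]
    · have hx' : U.indicator f =ᶠ[𝓝 x] 0 :=
        notMem_tsupport_iff_eventuallyEq.1 fun h => hx (hKU (hsupp h))
      rw [indicator_of_notMem hx, hx'.gradient_eq]
      simp [gradient]
  rw [← integral_indicator hU.measurableSet, ← integral_indicator hU.measurableSet, ← hgrad,
    ← integral_mul_laplacian hU hind (hK.of_isClosed_subset (isClosed_tsupport _) hsupp)
      (hsupp.trans hKU) hg]
  simp only [indicator_mul_left]

theorem setIntegral_mul_sq_le_setIntegral_norm_gradient_sq {w v Q : E → ℝ} {K : Set E}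
    (hU : IsOpen U) (hK : IsCompact K) (hKU : K ⊆ U) (hw : ContDiffOn ℝ 1 w U)
    (hw0 : EqOn w 0 (U \ K)) (hv : ContDiffOn ℝ 2 v U) (hv0 : ∀ x ∈ U, 0 < v x)
    (hQ : ContinuousOn Q U) (hsuper : ∀ x ∈ U, Q x * v x ≤ -Δ v x) :
    ∫ x in U, Q x * w x ^ 2 ≤ ∫ x in U, ‖∇ w x‖ ^ 2 := by
  have hv₁ : ContDiffOn ℝ 1 v U := hv.of_le one_le_two
  have hquot : ContDiffOn ℝ 1 (fun x => w x ^ 2 / v x) U :=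
    (hw.pow 2).div hv₁ fun x hx => (hv0 x hx).ne'
  have hquot0 : EqOn (fun x => w x ^ 2 / v x) 0 (U \ K) := fun x hx => by simp [hw0 hx]
  have hopen : IsOpen (U \ K) := hU.sdiff hK.isClosed
  have integrableOn {F : E → ℝ} :=
    integrableOn_of_eqOn_zero_diff_compact (μ := volume) (f := F) hU hK hKU
  calc ∫ x in U, Q x * w x ^ 2
      ≤ ∫ x in U, -(w x ^ 2 / v x * Δ v x) := by
        refine setIntegral_mono_on (integrableOn (hQ.mul (hw.continuousOn.pow 2)) fun x hx => ?_)
          (integrableOn (hquot.continuousOn.mul (continuousOn_laplacian hU hv)).neg fun x hx => ?_)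
          hU.measurableSet fun x hx => ?_
        · simp [hw0 hx]
        · simp [hw0 hx]
        · have hvx := hv0 x hx
          calc Q x * w x ^ 2 = w x ^ 2 / v x * (Q x * v x) := by field_simp
            _ ≤ w x ^ 2 / v x * -Δ v x := by gcongr; exact hsuper x hx
            _ = _ := by ring
    _ = ∫ x in U, ⟪∇ (fun y => w y ^ 2 / v y) x, ∇ v x⟫_ℝ := by
        rw [integral_neg, setIntegral_mul_laplacian hU hK hKU hquot hquot0 hv, neg_neg]
    _ ≤ ∫ x in U, ‖∇ w x‖ ^ 2 := by
        refine setIntegral_mono_on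
          (integrableOn ((continuousOn_gradient hU hquot).inner (𝕜 := ℝ)
            (continuousOn_gradient hU hv₁)) fun x hx => ?_)
          (integrableOn ((continuousOn_gradient hU hw).norm.pow 2) fun x hx => ?_)
          hU.measurableSet fun x hx => ?_
        · simp [eqOn_gradient_zero hopen hquot0 hx]
        · simp [eqOn_gradient_zero hopen hw0 hx]
        · have hmem := hU.mem_nhds hx
          exact inner_gradient_sq_div_le ((hw.contDiffAt hmem).differentiableAt one_ne_zero)
            ((hv.contDiffAt hmem).differentiableAt two_ne_zero) (hv0 x hx).ne'

end Integration

section Cutoff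

variable {ε t : ℝ}

lemma hasDerivAt_max_zero_pow (n : ℕ) (t : ℝ) :
    HasDerivAt (fun s : ℝ => max s 0 ^ (n + 2)) ((n + 2) * max t 0 ^ (n + 1)) t := by
  rcases lt_trichotomy t 0 with ht | rfl | ht
  · have hzero : (fun s : ℝ => max s 0 ^ (n + 2)) =ᶠ[𝓝 t] fun _ => 0 := by
      filter_upwards [Iio_mem_nhds ht] with s hs
      simp [max_eq_right (mem_Iio.1 hs).le]
    simpa [max_eq_right ht.le] using (hasDerivAt_const t (0 : ℝ)).congr_of_eventuallyEq hzero
  · have hbound : (fun s : ℝ => max s 0 ^ (n + 2)) =O[𝓝 0] fun s => s ^ (n + 2) :=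
      Asymptotics.isBigO_of_le _ fun s => by
        rcases le_total s 0 with hs | hs <;> simp [hs]
    simpa [hasDerivAt_iff_isLittleO] using
      hbound.trans_isLittleO (Asymptotics.isLittleO_pow_id (𝕜 := ℝ) (n := n + 2) (by lia))
  · have hpow : (fun s : ℝ => max s 0 ^ (n + 2)) =ᶠ[𝓝 t] fun s => s ^ (n + 2) := by
      filter_upwards [Ioi_mem_nhds ht] with s hs
      rw [max_eq_left (mem_Ioi.1 hs).le]
    simpa [max_eq_left ht.le] using (hasDerivAt_pow (n + 2) t).congr_of_eventuallyEq hpow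

lemma contDiff_max_zero_pow (n : ℕ) : ContDiff ℝ 1 fun s : ℝ => max s 0 ^ (n + 2) := by
  refine contDiff_one_iff_deriv.2 ⟨fun t => (hasDerivAt_max_zero_pow n t).differentiableAt, ?_⟩
  rw [funext fun t => (hasDerivAt_max_zero_pow n t).deriv]
  fun_prop

/-- A truncation of the identity of `(0, ∞)`, vanishing on `(0, ε]`: it turns a positive function
with compact superlevel sets into a compactly supported test function. The square makes it `C¹`. -/
def truncation (ε t : ℝ) : ℝ := max (t - ε) 0 ^ 2 / t

/-- The product of `truncation ε` and its derivative, written so as to be visibly `C¹`; tested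
against `-Δψ` it dominates the Dirichlet energy of the truncation of `ψ`. -/
def truncationFlux (ε t : ℝ) : ℝ := (2 * t * max (t - ε) 0 ^ 3 - max (t - ε) 0 ^ 4) / t ^ 3

lemma truncation_eq_zero (h : t ≤ ε) : truncation ε t = 0 := by
  simp [truncation, max_eq_right (sub_nonpos.2 h)]

lemma truncationFlux_eq_zero (h : t ≤ ε) : truncationFlux ε t = 0 := by
  simp [truncationFlux, max_eq_right (sub_nonpos.2 h)]

lemma max_sub_zero_le (hε : 0 ≤ ε) (ht : 0 < t) : max (t - ε) 0 ≤ t := max_le (by linarith) ht.le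

lemma truncation_pos (hε : 0 < ε) (h : ε < t) : 0 < truncation ε t := by
  have : 0 < max (t - ε) 0 := lt_max_of_lt_left (sub_pos.2 h)
  have : 0 < t := hε.trans h
  unfold truncation
  positivity

lemma truncation_nonneg (ht : 0 < t) : 0 ≤ truncation ε t := by
  unfold truncation
  positivity

lemma truncation_anti {ε' : ℝ} (ht : 0 < t) (h : ε ≤ ε') : truncation ε' t ≤ truncation ε t := by
  unfold truncation
  gcongr

lemma truncationFlux_nonneg (hε : 0 ≤ ε) (ht : 0 < t) : 0 ≤ truncationFlux ε t := by
  have := max_sub_zero_le hε ht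
  have hfactor : truncationFlux ε t = max (t - ε) 0 ^ 3 * (2 * t - max (t - ε) 0) / t ^ 3 := by
    unfold truncationFlux
    ring
  rw [hfactor]
  exact div_nonneg (mul_nonneg (by positivity) (by linarith)) (by positivity)

lemma contDiffOn_truncation (ε : ℝ) : ContDiffOn ℝ 1 (truncation ε) (Ioi 0) :=
  (((contDiff_max_zero_pow 0).comp (contDiff_id.sub contDiff_const)).contDiffOn).div
    contDiffOn_id fun _ ht => (mem_Ioi.1 ht).ne'

lemma contDiffOn_truncationFlux (ε : ℝ) : ContDiffOn ℝ 1 (truncationFlux ε) (Ioi 0) := by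
  have hpow (n : ℕ) : ContDiff ℝ 1 fun t : ℝ => max (t - ε) 0 ^ (n + 2) :=
    (contDiff_max_zero_pow n).comp (contDiff_id.sub contDiff_const)
  exact ((((contDiff_const.mul contDiff_id).mul (hpow 1)).sub (hpow 2)).contDiffOn).div
    (contDiffOn_id.pow 3) fun t ht => pow_ne_zero 3 (mem_Ioi.1 ht).ne'

lemma deriv_truncation (ε : ℝ) (ht : 0 < t) :
    deriv (truncation ε) t = max (t - ε) 0 * (2 * t - max (t - ε) 0) / t ^ 2 := by
  have hpow := (hasDerivAt_max_zero_pow 0 (t - ε)).comp t ((hasDerivAt_id t).sub_const ε)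
  refine ((hpow.div (hasDerivAt_id t) ht.ne').congr_deriv ?_).deriv
  simp only [Function.comp_def, id]
  push_cast
  ring

lemma deriv_truncationFlux (ε : ℝ) (ht : 0 < t) :
    deriv (truncationFlux ε) t =
      deriv (truncation ε) t ^ 2 + 2 * (max (t - ε) 0 * (t - max (t - ε) 0) / t ^ 2) ^ 2 := by
  have hpow (n : ℕ) := (hasDerivAt_max_zero_pow n (t - ε)).comp t ((hasDerivAt_id t).sub_const ε)
  have hquot := (((hasDerivAt_id t).const_mul 2).mul (hpow 1)).sub (hpow 2) |>.div
    (hasDerivAt_pow 3 t) (by positivity)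
  rw [deriv_truncation ε ht]
  refine (hquot.congr_deriv ?_).deriv
  simp only [Function.comp_def, id, Pi.mul_apply, Pi.sub_apply]
  push_cast
  field_simp
  ring

lemma sq_deriv_truncation_le (ε : ℝ) (ht : 0 < t) :
    deriv (truncation ε) t ^ 2 ≤ deriv (truncationFlux ε) t := by
  rw [deriv_truncationFlux ε ht]
  exact le_add_of_nonneg_right (by positivity)

lemma norm_gradient_truncation_sq_le {E : Type*} [NormedAddCommGroup E] [InnerProductSpace ℝ E]
    [CompleteSpace E] {ψ : E → ℝ} {x : E} (hψ : DifferentiableAt ℝ ψ x)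
    (hψx : 0 < ψ x) :
    ‖∇ (fun y => truncation ε (ψ y)) x‖ ^ 2 ≤
      ⟪∇ (fun y => truncationFlux ε (ψ y)) x, ∇ ψ x⟫_ℝ := by
  have hIoi := Ioi_mem_nhds hψx
  rw [gradient_comp (((contDiffOn_truncation ε).contDiffAt hIoi).differentiableAt one_ne_zero) hψ,
    gradient_comp (((contDiffOn_truncationFlux ε).contDiffAt hIoi).differentiableAt one_ne_zero) hψ,
    norm_smul, mul_pow, norm_eq_abs, sq_abs, real_inner_smul_left, real_inner_self_eq_norm_sq]
  gcongr
  exact sq_deriv_truncation_le ε hψx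

lemma abs_mul_truncationFlux_sub_sq_le (hε : 0 ≤ ε) (ht : 0 < t) :
    |t * truncationFlux ε t - truncation ε t ^ 2| ≤ 2 * ε * t := by
  have hy := max_sub_zero_le hε ht
  have hεy : t - max (t - ε) 0 ≤ ε := by linarith [le_max_left (t - ε) 0]
  have key : t * truncationFlux ε t - truncation ε t ^ 2 =
      2 * (t - max (t - ε) 0) * (max (t - ε) 0 ^ 3 / t ^ 2) := by
    unfold truncationFlux truncation
    field_simp
    ring
  have hcube : max (t - ε) 0 ^ 3 / t ^ 2 ≤ t := by
    rw [div_le_iff₀ (by positivity)]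
    calc max (t - ε) 0 ^ 3 ≤ t ^ 3 := by gcongr
      _ = t * t ^ 2 := by ring
  rw [key, abs_of_nonneg (mul_nonneg (by linarith) (by positivity))]
  gcongr

end Cutoff

section Comparison

variable {E : Type*} [NormedAddCommGroup E] [InnerProductSpace ℝ E] [FiniteDimensional ℝ E]
  [MeasurableSpace E] [BorelSpace E] {D : Set E} {ψ v V : E → ℝ} {κ μ ε : ℝ}

lemma integrableOn_mul_truncation_sq (hD : IsOpen D) (hψ : ContinuousOn ψ D)
    (hψ0 : ∀ x ∈ D, 0 < ψ x) (hK : IsCompact {x ∈ D | ε ≤ ψ x}) (hV : ContinuousOn V D) :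
    IntegrableOn (fun x => V x * truncation ε (ψ x) ^ 2) D := by
  refine integrableOn_of_eqOn_zero_diff_compact hD hK (sep_subset _ _)
    (hV.mul (((contDiffOn_truncation ε).continuousOn.comp hψ hψ0).pow 2)) fun x hx => ?_
  simp [truncation_eq_zero (not_le.1 fun h => hx.2 ⟨hx.1, h⟩).le]

lemma setIntegral_mul_truncation_sq_pos (hε : 0 < ε) (hD : IsOpen D) (hψ : ContinuousOn ψ D)
    (hψ0 : ∀ x ∈ D, 0 < ψ x) (hK : IsCompact {x ∈ D | ε ≤ ψ x}) (hV : ContinuousOn V D)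
    (hV0 : ∀ x ∈ D, 0 < V x) {x₀ : E} (hx₀ : x₀ ∈ D) (hεx₀ : ε < ψ x₀) :
    0 < ∫ x in D, V x * truncation ε (ψ x) ^ 2 := by
  have hopen : IsOpen (D ∩ ψ ⁻¹' Ioi ε) := hψ.isOpen_inter_preimage hD isOpen_Ioi
  rw [setIntegral_pos_iff_support_of_nonneg_ae
    (ae_restrict_of_forall_mem hD.measurableSet fun x hx => mul_nonneg (hV0 x hx).le (sq_nonneg _))
    (integrableOn_mul_truncation_sq hD hψ hψ0 hK hV)]
  refine (hopen.measure_pos volume ⟨x₀, hx₀, hεx₀⟩).trans_le (measure_mono fun x hx => ⟨?_, hx.1⟩)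
  exact (mul_pos (hV0 x hx.1) (pow_pos (truncation_pos hε hx.2) 2)).ne'

lemma setIntegral_mul_truncation_sq_anti {ε' : ℝ} (hεε' : ε ≤ ε') (hD : IsOpen D)
    (hψ : ContinuousOn ψ D) (hψ0 : ∀ x ∈ D, 0 < ψ x) (hK : ∀ δ ≥ ε, IsCompact {x ∈ D | δ ≤ ψ x})
    (hV : ContinuousOn V D) (hV0 : ∀ x ∈ D, 0 < V x) :
    ∫ x in D, V x * truncation ε' (ψ x) ^ 2 ≤ ∫ x in D, V x * truncation ε (ψ x) ^ 2 := by
  refine setIntegral_mono_on (integrableOn_mul_truncation_sq hD hψ hψ0 (hK ε' hεε') hV)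
    (integrableOn_mul_truncation_sq hD hψ hψ0 (hK ε le_rfl) hV) hD.measurableSet fun x hx => ?_
  have := truncation_nonneg (ε := ε') (hψ0 x hx)
  have := (hV0 x hx).le
  gcongr
  exact truncation_anti (hψ0 x hx) hεε'

lemma setIntegral_truncationFlux_mul_neg_laplacian_le (hε : 0 ≤ ε) (hD : IsOpen D)
    (hψ : ContDiffOn ℝ 2 ψ D) (hψ0 : ∀ x ∈ D, 0 < ψ x) (hK : IsCompact {x ∈ D | ε ≤ ψ x})
    (hV : ContinuousOn V D) (hV0 : ∀ x ∈ D, 0 < V x) (hVψ : IntegrableOn (fun x => V x * ψ x) D)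
    (hsub : ∀ x ∈ D, -Δ ψ x ≤ κ * (V x * ψ x)) :
    ∫ x in D, truncationFlux ε (ψ x) * -Δ ψ x ≤
      κ * (∫ x in D, V x * truncation ε (ψ x) ^ 2) + 2 * ε * |κ| * ∫ x in D, V x * ψ x := by
  have hint := integrableOn_mul_truncation_sq hD hψ.continuousOn hψ0 hK hV
  have hbound : IntegrableOn (fun x => κ * (V x * truncation ε (ψ x) ^ 2) +
      2 * ε * |κ| * (V x * ψ x)) D := (hint.const_mul κ).add (hVψ.const_mul _)
  have hflux : ContinuousOn (fun x => truncationFlux ε (ψ x)) D :=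
    (contDiffOn_truncationFlux ε).continuousOn.comp hψ.continuousOn hψ0
  rw [← integral_const_mul, ← integral_const_mul,
    ← integral_add (hint.const_mul κ) (hVψ.const_mul _)]
  refine setIntegral_mono_on
    (integrableOn_of_eqOn_zero_diff_compact hD hK (sep_subset _ _)
      (hflux.mul (continuousOn_laplacian hD hψ).neg) fun x hx => ?_)
    hbound hD.measurableSet fun x hx => ?_
  · simp [truncationFlux_eq_zero (not_le.1 fun h => hx.2 ⟨hx.1, h⟩).le]
  · have herr := abs_mul_truncationFlux_sub_sq_le hε (hψ0 x hx)
    calc truncationFlux ε (ψ x) * -Δ ψ x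
        ≤ truncationFlux ε (ψ x) * (κ * (V x * ψ x)) :=
          mul_le_mul_of_nonneg_left (hsub x hx) (truncationFlux_nonneg hε (hψ0 x hx))
      _ = κ * (V x * truncation ε (ψ x) ^ 2) +
          V x * (κ * (ψ x * truncationFlux ε (ψ x) - truncation ε (ψ x) ^ 2)) := by ring
      _ ≤ κ * (V x * truncation ε (ψ x) ^ 2) + V x * (|κ| * (2 * ε * ψ x)) := by
          refine add_le_add_right (mul_le_mul_of_nonneg_left ?_ (hV0 x hx).le) _
          exact (le_abs_self _).trans (by rw [abs_mul]; gcongr)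
      _ = _ := by ring

variable [CompleteSpace E]

lemma setIntegral_norm_gradient_truncation_sq_le (hD : IsOpen D) (hψ : ContDiffOn ℝ 2 ψ D)
    (hψ0 : ∀ x ∈ D, 0 < ψ x) (hK : IsCompact {x ∈ D | ε ≤ ψ x}) :
    ∫ x in D, ‖∇ (fun y => truncation ε (ψ y)) x‖ ^ 2 ≤
      ∫ x in D, truncationFlux ε (ψ x) * -Δ ψ x := by
  have hψ₁ : ContDiffOn ℝ 1 ψ D := hψ.of_le one_le_two
  have htrunc : ContDiffOn ℝ 1 (fun x => truncation ε (ψ x)) D :=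
    (contDiffOn_truncation ε).comp hψ₁ hψ0
  have hflux : ContDiffOn ℝ 1 (fun x => truncationFlux ε (ψ x)) D :=
    (contDiffOn_truncationFlux ε).comp hψ₁ hψ0
  have htrunc0 : EqOn (fun x => truncation ε (ψ x)) 0 (D \ {x ∈ D | ε ≤ ψ x}) := fun x hx =>
    truncation_eq_zero (not_le.1 fun h => hx.2 ⟨hx.1, h⟩).le
  have hflux0 : EqOn (fun x => truncationFlux ε (ψ x)) 0 (D \ {x ∈ D | ε ≤ ψ x}) := fun x hx =>
    truncationFlux_eq_zero (not_le.1 fun h => hx.2 ⟨hx.1, h⟩).le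
  have hopen : IsOpen (D \ {x ∈ D | ε ≤ ψ x}) := hD.sdiff hK.isClosed
  have hKD : {x ∈ D | ε ≤ ψ x} ⊆ D := sep_subset _ _
  simp only [mul_neg]
  rw [integral_neg, setIntegral_mul_laplacian hD hK hKD hflux hflux0 hψ, neg_neg]
  refine setIntegral_mono_on
    (integrableOn_of_eqOn_zero_diff_compact hD hK hKD
      ((continuousOn_gradient hD htrunc).norm.pow 2) fun x hx => ?_)
    (integrableOn_of_eqOn_zero_diff_compact hD hK hKD
      ((continuousOn_gradient hD hflux).inner (𝕜 := ℝ) (continuousOn_gradient hD hψ₁))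
      fun x hx => ?_)
    hD.measurableSet fun x hx => norm_gradient_truncation_sq_le
      ((hψ.contDiffAt (hD.mem_nhds hx)).differentiableAt two_ne_zero) (hψ0 x hx)
  · simp [eqOn_gradient_zero hopen htrunc0 hx]
  · simp [eqOn_gradient_zero hopen hflux0 hx]

lemma mul_setIntegral_truncation_sq_le (hε : 0 ≤ ε) (hD : IsOpen D) (hψ : ContDiffOn ℝ 2 ψ D)
    (hψ0 : ∀ x ∈ D, 0 < ψ x) (hK : IsCompact {x ∈ D | ε ≤ ψ x})
    (hV : ContinuousOn V D) (hV0 : ∀ x ∈ D, 0 < V x) (hVψ : IntegrableOn (fun x => V x * ψ x) D)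
    (hsub : ∀ x ∈ D, -Δ ψ x ≤ κ * (V x * ψ x)) (hv : ContDiffOn ℝ 2 v D)
    (hv0 : ∀ x ∈ D, 0 < v x) (hsuper : ∀ x ∈ D, μ * V x * v x ≤ -Δ v x) :
    (μ - κ) * ∫ x in D, V x * truncation ε (ψ x) ^ 2 ≤ 2 * ε * |κ| * ∫ x in D, V x * ψ x := by
  have htrunc : ContDiffOn ℝ 1 (fun x => truncation ε (ψ x)) D :=
    (contDiffOn_truncation ε).comp (hψ.of_le one_le_two) hψ0
  have hQ : ContinuousOn (fun x => μ * V x) D := continuousOn_const.mul hV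
  have hardy : μ * ∫ x in D, V x * truncation ε (ψ x) ^ 2 ≤
      ∫ x in D, ‖∇ (fun y => truncation ε (ψ y)) x‖ ^ 2 := by
    simpa only [mul_assoc, integral_const_mul] using
      setIntegral_mul_sq_le_setIntegral_norm_gradient_sq hD hK (sep_subset _ _) htrunc
        (fun x hx => truncation_eq_zero (not_le.1 fun h => hx.2 ⟨hx.1, h⟩).le)
        hv hv0 hQ hsuper
  linarith [hardy.trans (setIntegral_norm_gradient_truncation_sq_le hD hψ hψ0 hK),
    setIntegral_truncationFlux_mul_neg_laplacian_le hε hD hψ hψ0 hK hV hV0 hVψ hsub]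

theorem le_of_pos_supersolution (hD : IsOpen D) (hDne : D.Nonempty) (hψ : ContDiffOn ℝ 2 ψ D)
    (hψ0 : ∀ x ∈ D, 0 < ψ x) (hK : ∀ ε > 0, IsCompact {x ∈ D | ε ≤ ψ x})
    (hV : ContinuousOn V D) (hV0 : ∀ x ∈ D, 0 < V x) (hVψ : IntegrableOn (fun x => V x * ψ x) D)
    (hsub : ∀ x ∈ D, -Δ ψ x ≤ κ * (V x * ψ x)) (hv : ContDiffOn ℝ 2 v D)
    (hv0 : ∀ x ∈ D, 0 < v x) (hsuper : ∀ x ∈ D, μ * V x * v x ≤ -Δ v x) : μ ≤ κ := by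
  obtain ⟨x₀, hx₀⟩ := hDne
  obtain ⟨δ, hδ0, hδ⟩ := exists_between (hψ0 x₀ hx₀)
  have hmass := setIntegral_mul_truncation_sq_pos hδ0 hD hψ.continuousOn hψ0 (hK δ hδ0) hV hV0
    hx₀ hδ
  by_contra! hlt
  have hle : ∀ᶠ ε in 𝓝[>] (0 : ℝ), (μ - κ) * ∫ x in D, V x * truncation δ (ψ x) ^ 2 ≤
      2 * ε * |κ| * ∫ x in D, V x * ψ x := by
    filter_upwards [Ioo_mem_nhdsGT hδ0] with ε ⟨hε0, hεδ⟩
    refine le_trans (mul_le_mul_of_nonneg_left ?_ (sub_pos.2 hlt).le)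
      (mul_setIntegral_truncation_sq_le hε0.le hD hψ hψ0 (hK ε hε0) hV hV0 hVψ hsub hv hv0 hsuper)
    exact setIntegral_mul_truncation_sq_anti hεδ.le hD hψ.continuousOn hψ0
      (fun η hη => hK η (hε0.trans_le hη)) hV hV0
  have hlim : Filter.Tendsto (fun ε => 2 * ε * |κ| * ∫ x in D, V x * ψ x) (𝓝[>] (0 : ℝ)) (𝓝 0) :=
    (Continuous.tendsto' (by fun_prop) 0 0 (by simp)).mono_left nhdsWithin_le_nhds
  exact (mul_pos (sub_pos.2 hlt) hmass).not_ge (ge_of_tendsto hlim hle)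

end Comparison

section Polar

lemma log_norm_eq_log_norm_sq_div_two (E : Type*) [NormedAddCommGroup E] :
    (fun y : E => log ‖y‖) = fun y => log (‖y‖ ^ 2) / 2 := by
  ext y
  rw [log_pow]
  ring

variable {E : Type*} [NormedAddCommGroup E] [InnerProductSpace ℝ E]

lemma contDiffAt_log_norm {n : WithTop ℕ∞} {x : E} (hx : x ≠ 0) :
    ContDiffAt ℝ n (fun y : E => log ‖y‖) x :=
  (contDiffAt_norm ℝ hx).log (norm_ne_zero_iff.2 hx)

lemma gradient_norm_sq [CompleteSpace E] (x : E) : ∇ (fun y : E => ‖y‖ ^ 2) x = (2 : ℝ) • x := by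
  refine ext_inner_right ℝ fun v => ?_
  rw [inner_gradient_left, fderiv_norm_sq_apply, real_inner_smul_left]
  simp

lemma deriv_log_div_two : deriv (fun t => log t / 2) = fun t => t⁻¹ / 2 := by
  ext t
  rw [deriv_div_const, deriv_log]

lemma gradient_log_norm [CompleteSpace E] {x : E} (hx : x ≠ 0) :
    ∇ (fun y : E => log ‖y‖) x = (‖x‖ ^ 2)⁻¹ • x := by
  have hsq : ‖x‖ ^ 2 ≠ 0 := pow_ne_zero 2 (norm_ne_zero_iff.2 hx)
  rw [log_norm_eq_log_norm_sq_div_two E, gradient_comp (f := fun y => ‖y‖ ^ 2)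
      (h := fun t => log t / 2) ((differentiableAt_log hsq).div_const 2)
      (hasStrictFDerivAt_norm_sq x).differentiableAt, gradient_norm_sq,
    deriv_log_div_two, smul_smul, div_mul_cancel₀ _ two_ne_zero]

lemma inner_gradient_eq_zero_of_homogeneous [CompleteSpace E] {f : E → ℝ} {x : E}
    (hf : DifferentiableAt ℝ f x) (hom : ∀ c > (0 : ℝ), f (c • x) = f x) : ⟪x, ∇ f x⟫_ℝ = 0 := by
  have hline : HasDerivAt (fun t : ℝ => f (x + t • x)) (fderiv ℝ f x x) 0 :=
    hf.hasFDerivAt.hasLineDerivAt x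
  have hconst : (fun t : ℝ => f (x + t • x)) =ᶠ[𝓝 0] fun _ => f x := by
    filter_upwards [Ioi_mem_nhds neg_one_lt_zero] with t ht
    rw [← hom (1 + t) (by linarith [mem_Ioi.1 ht]), add_smul, one_smul]
  rw [real_inner_comm, inner_gradient_left]
  exact hline.unique ((hasDerivAt_const 0 (f x)).congr_of_eventuallyEq hconst)

variable [FiniteDimensional ℝ E]

lemma laplacian_norm_sq (x : E) :
    Δ (fun y : E => ‖y‖ ^ 2) x = 2 * Module.finrank ℝ E := by
  rw [laplacian_eq_sum_fderiv_fderiv (stdOrthonormalBasis ℝ E) (contDiff_norm_sq ℝ).contDiffAt]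
  have second (v : E) : fderiv ℝ (fun y : E => fderiv ℝ (fun z : E => ‖z‖ ^ 2) y v) x v =
      2 * ‖v‖ ^ 2 := by
    have hlin : (fun y : E => fderiv ℝ (fun z : E => ‖z‖ ^ 2) y v) =
        ((2 : ℝ) • innerSL ℝ v : E →L[ℝ] ℝ) := by
      ext y
      simp [fderiv_norm_sq_apply, real_inner_comm]
    rw [hlin, ContinuousLinearMap.fderiv]
    simp
  simp only [second, OrthonormalBasis.norm_eq_one]
  simp [mul_comm]

lemma laplacian_log_norm {x : E} (hx : x ≠ 0) :
    Δ (fun y : E => log ‖y‖) x = (Module.finrank ℝ E - 2) * (‖x‖ ^ 2)⁻¹ := by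
  have := FiniteDimensional.complete ℝ E
  have hlog : ContDiffAt ℝ 2 (fun t => log t / 2) (‖x‖ ^ 2) :=
    (contDiffAt_log.2 (by positivity)).div_const 2
  rw [log_norm_eq_log_norm_sq_div_two E, laplacian_comp (f := fun y => ‖y‖ ^ 2)
      (h := fun t => log t / 2) hlog (contDiff_norm_sq ℝ).contDiffAt, laplacian_norm_sq,
    gradient_norm_sq, deriv_log_div_two,
    deriv_div_const, deriv_inv, norm_smul, norm_two]
  field_simp
  ring

variable [CompleteSpace E]

lemma laplacian_radial_mul {h : ℝ → ℝ} {f : E → ℝ} {x : E} (hx : x ≠ 0)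
    (hh : ContDiffAt ℝ 2 h (log ‖x‖)) (hf : ContDiffAt ℝ 2 f x) (hradial : ⟪x, ∇ f x⟫_ℝ = 0) :
    Δ (fun y => h (log ‖y‖) * f y) x =
      (deriv (deriv h) (log ‖x‖) + (Module.finrank ℝ E - 2) * deriv h (log ‖x‖)) *
        (‖x‖ ^ 2)⁻¹ * f x + h (log ‖x‖) * Δ f x := by
  have hlog := contDiffAt_log_norm (n := 2) hx
  have hnorm : ‖(‖x‖ ^ 2)⁻¹ • x‖ ^ 2 = (‖x‖ ^ 2)⁻¹ := by
    rw [norm_smul, norm_of_nonneg (by positivity)]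
    field_simp
  have hcomp : ContDiffAt ℝ 2 (fun y => h (log ‖y‖)) x := hh.fun_comp x hlog
  rw [laplacian_mul hcomp hf, laplacian_comp (f := fun y => log ‖y‖) hh hlog,
    gradient_comp (f := fun y => log ‖y‖) (hh.differentiableAt two_ne_zero)
      (hlog.differentiableAt two_ne_zero),
    gradient_log_norm hx, laplacian_log_norm hx, hnorm, real_inner_smul_left,
    real_inner_smul_left, hradial]
  ring

end Polar

section ConicalShell

lemma continuousOn_log_norm {E : Type*} [NormedAddCommGroup E] :
    ContinuousOn (fun x : E => log ‖x‖) {0}ᶜ :=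
  continuousOn_id.norm.log fun _ hx => norm_ne_zero_iff.2 hx

variable {E : Type*} [NormedAddCommGroup E] [NormedSpace ℝ E] {I : Set ℝ} {Ω : Set E} {x : E}

/-- The part of the cone over `Ω` where `log ‖x‖ ∈ I`. -/
def conicalShell (I : Set ℝ) (Ω : Set E) : Set E :=
  {x | x ≠ 0 ∧ log ‖x‖ ∈ I ∧ ‖x‖⁻¹ • x ∈ Ω}

lemma exp_smul_mem_conicalShell {t : ℝ} {θ : E} (hθ : ‖θ‖ = 1) (ht : t ∈ I) (hθΩ : θ ∈ Ω) :
    exp t • θ ∈ conicalShell I Ω := by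
  have hnorm : ‖exp t • θ‖ = exp t := by simp [norm_smul, hθ]
  refine ⟨norm_pos_iff.1 (hnorm.symm ▸ exp_pos t), ?_, ?_⟩
  · rwa [hnorm, log_exp]
  · rwa [hnorm, smul_smul, inv_mul_cancel₀ (exp_pos t).ne', one_smul]

lemma continuousOn_inv_norm_smul : ContinuousOn (fun x : E => ‖x‖⁻¹ • x) {0}ᶜ :=
  (continuousOn_id.norm.inv₀ fun _ hx => norm_ne_zero_iff.2 hx).smul continuousOn_id

lemma isOpen_conicalShell (hI : IsOpen I)
    (hΩ : IsOpen {ω : Metric.sphere (0 : E) 1 | (ω : E) ∈ Ω}) : IsOpen (conicalShell I Ω) := by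
  obtain ⟨O, hO, hOΩ⟩ := isOpen_induced_iff.1 hΩ
  have hpolar := continuousOn_log_norm.prodMk (continuousOn_inv_norm_smul (E := E))
  convert hpolar.isOpen_inter_preimage isOpen_compl_singleton (hI.prod hO) using 1
  ext x
  refine and_congr_right fun hx => and_congr_right fun _ => ?_
  have hsphere : ‖x‖⁻¹ • x ∈ Metric.sphere (0 : E) 1 := by
    simp [norm_smul, norm_ne_zero_iff.2 hx]
  exact (Set.ext_iff.1 hOΩ ⟨_, hsphere⟩).symm

lemma isCompact_conicalShell (hI : IsCompact I) (hΩ : IsCompact Ω)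
    (hΩS : Ω ⊆ Metric.sphere 0 1) : IsCompact (conicalShell I Ω) := by
  have himage : conicalShell I Ω = (fun p : ℝ × E => exp p.1 • p.2) '' I ×ˢ Ω := by
    refine Subset.antisymm (fun x hx => ⟨(log ‖x‖, ‖x‖⁻¹ • x), hx.2, ?_⟩) ?_
    · have hpos := norm_pos_iff.2 hx.1
      simp only [exp_log hpos, smul_smul, mul_inv_cancel₀ hpos.ne', one_smul]
    · rintro _ ⟨⟨t, θ⟩, ⟨ht, hθ⟩, rfl⟩
      exact exp_smul_mem_conicalShell (mem_sphere_zero_iff_norm.1 (hΩS hθ)) ht hθ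
  rw [himage]
  exact (hI.prod hΩ).image (by fun_prop)

end ConicalShell

section HardyMode

/-- The solution `e^{-at} sin (ω (t - T))` of the oscillator equation `h'' + 2 a h' = -(a² + ω²) h`,
positive between its consecutive zeros `T` and `T + π / ω`. -/
def radialProfile (a ω T t : ℝ) : ℝ := exp (-(a * t)) * sin (ω * (t - T))

variable {a ω T t : ℝ}

lemma contDiff_radialProfile {n : WithTop ℕ∞} : ContDiff ℝ n (radialProfile a ω T) := by
  unfold radialProfile
  fun_prop

lemma radialProfile_pos (hω : 0 < ω) (ht : t ∈ Ioo T (T + π / ω)) : 0 < radialProfile a ω T t := by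
  refine mul_pos (exp_pos _) (sin_pos_of_pos_of_lt_pi (mul_pos hω (sub_pos.2 ht.1)) ?_)
  rw [← lt_div_iff₀' hω]
  linarith [ht.2]

lemma radialProfile_eq_zero (hω : ω ≠ 0) (ht : t = T ∨ t = T + π / ω) :
    radialProfile a ω T t = 0 := by
  rcases ht with rfl | rfl
  · simp [radialProfile]
  · simp [radialProfile, mul_div_cancel₀ _ hω]

lemma deriv_radialProfile : deriv (radialProfile a ω T) =
    fun t => ω * (exp (-(a * t)) * cos (ω * (t - T))) - a * radialProfile a ω T t := by
  ext t
  have hexp : HasDerivAt (fun t => exp (-(a * t))) (exp (-(a * t)) * -(a * 1)) t :=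
    ((hasDerivAt_id t).const_mul a).neg.exp
  have hsin : HasDerivAt (fun t => sin (ω * (t - T))) (cos (ω * (t - T)) * (ω * 1)) t :=
    (((hasDerivAt_id t).sub_const T).const_mul ω).sin
  refine ((hexp.mul hsin).congr_deriv ?_).deriv
  unfold radialProfile
  ring

lemma deriv_deriv_radialProfile_add : deriv (deriv (radialProfile a ω T)) t +
    2 * a * deriv (radialProfile a ω T) t = -(a ^ 2 + ω ^ 2) * radialProfile a ω T t := by
  have hexp : HasDerivAt (fun t => exp (-(a * t))) (exp (-(a * t)) * -(a * 1)) t :=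
    ((hasDerivAt_id t).const_mul a).neg.exp
  have hcos : HasDerivAt (fun t => cos (ω * (t - T))) (-sin (ω * (t - T)) * (ω * 1)) t :=
    (((hasDerivAt_id t).sub_const T).const_mul ω).cos
  have hprofile : HasDerivAt (radialProfile a ω T) (deriv (radialProfile a ω T) t) t :=
    (contDiff_radialProfile.differentiable one_ne_zero t).hasDerivAt
  have hsecond := (((hexp.mul hcos).const_mul ω).sub (hprofile.const_mul a)).deriv
  rw [deriv_radialProfile] at hsecond ⊢
  refine (congrArg (· + _) hsecond).trans ?_
  unfold radialProfile
  ring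

/-- The separated function `x ↦ h(log ‖x‖) φ(x / ‖x‖)`, where `h` is the radial profile for which
`-Δψ = (C_{H,Ω} + ω²) |x|⁻² ψ`. -/
def hardyMode (N : ℕ) (φ : Euc N → ℝ) (ω T : ℝ) (x : Euc N) : ℝ :=
  radialProfile (((N : ℝ) - 2) / 2) ω T (log ‖x‖) * φ (‖x‖⁻¹ • x)

variable {N : ℕ} {Ω : Set (Euc N)} {lam1 : ℝ} {φ : Euc N → ℝ} {x : Euc N}

lemma lap_eq_laplacian (u : Euc N → ℝ) : lap N u = Δ u := by
  rw [laplacian_eq_iteratedFDeriv_orthonormalBasis u (EuclideanSpace.basisFun (Fin N) ℝ)]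
  ext x
  simp [lap]

lemma rpow_neg_two (r : ℝ) : r ^ (-(2 : ℝ)) = (r ^ 2)⁻¹ := by
  exact_mod_cast rpow_neg_natCast r 2

lemma cone_eq_conicalShell : cone N Ω = conicalShell univ Ω := by
  simp [cone, conicalShell]

lemma conicalShell_subset_cone {I : Set ℝ} : conicalShell I Ω ⊆ cone N Ω :=
  fun _ hx => ⟨hx.1, hx.2.2⟩

lemma conicalShell_Ioo_subset_coneGT {b : ℝ} : conicalShell (Ioo T b) Ω ⊆ coneGT N T Ω :=
  fun _ hx => ⟨((lt_add_one T).trans_le (add_one_le_exp T)).trans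
    ((lt_log_iff_exp_lt (norm_pos_iff.2 hx.1)).1 hx.2.1.1), hx.2.2⟩

lemma isOpen_cone (hΩ : IsOpen {ω : Metric.sphere (0 : Euc N) 1 | (ω : Euc N) ∈ Ω}) :
    IsOpen (cone N Ω) :=
  cone_eq_conicalShell ▸ isOpen_conicalShell isOpen_univ hΩ

lemma contDiffOn_hardyMode (hφ : ContDiffOn ℝ 2 (fun x => φ (‖x‖⁻¹ • x)) (cone N Ω)) :
    ContDiffOn ℝ 2 (hardyMode N φ ω T) (cone N Ω) :=
  (contDiff_radialProfile.comp_contDiffOn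
    fun _ hx => (contDiffAt_log_norm hx.1).contDiffWithinAt).mul hφ

lemma continuousOn_hardyMode {I : Set ℝ} (hφ : ContinuousOn φ Ω) :
    ContinuousOn (hardyMode N φ ω T) (conicalShell I Ω) :=
  ((contDiff_radialProfile (n := 0)).continuous.comp_continuousOn
    (continuousOn_log_norm.mono fun _ hx => hx.1)).mul
    (hφ.comp (continuousOn_inv_norm_smul.mono fun _ hx => hx.1) fun _ hx => hx.2.2)

lemma neg_laplacian_hardyMode (hφ : DirichletEigenpair N Ω lam1 φ) (hΩ : IsOpen (cone N Ω))
    (hx : x ∈ cone N Ω) : -Δ (hardyMode N φ ω T) x =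
      (CHconst N lam1 + ω ^ 2) * ((‖x‖ ^ 2)⁻¹ * hardyMode N φ ω T x) := by
  have hext : ContDiffAt ℝ 2 (fun y => φ (‖y‖⁻¹ • y)) x := hφ.smoothExt.contDiffAt (hΩ.mem_nhds hx)
  have hradial : ⟪x, ∇ (fun y => φ (‖y‖⁻¹ • y)) x⟫_ℝ = 0 :=
    inner_gradient_eq_zero_of_homogeneous (hext.differentiableAt two_ne_zero) fun c hc => by
      rw [norm_smul, norm_of_nonneg hc.le, mul_inv_rev, smul_smul, mul_assoc,
        inv_mul_cancel₀ hc.ne', mul_one]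
  have heigen := hφ.eigen x hx
  rw [lap_eq_laplacian, rpow_neg_two] at heigen
  have hode := deriv_deriv_radialProfile_add (a := ((N : ℝ) - 2) / 2) (ω := ω) (T := T)
    (t := log ‖x‖)
  rw [mul_div_cancel₀ _ two_ne_zero] at hode
  unfold hardyMode
  rw [laplacian_radial_mul hx.1 contDiff_radialProfile.contDiffAt hext hradial, heigen,
    finrank_euclideanSpace_fin, hode, CHconst]
  ring

lemma hardyMode_pos (hφ : ∀ θ ∈ Ω, 0 < φ θ) (hω : 0 < ω)
    (hx : x ∈ conicalShell (Ioo T (T + π / ω)) Ω) : 0 < hardyMode N φ ω T x :=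
  mul_pos (radialProfile_pos hω hx.2.1) (hφ _ hx.2.2)

lemma mem_conicalShell_of_hardyMode_pos (hφ : ∀ θ ∈ closure Ω \ Ω, φ θ = 0) (hω : ω ≠ 0)
    (hx : x ∈ conicalShell (Icc T (T + π / ω)) (closure Ω)) (hpos : 0 < hardyMode N φ ω T x) :
    x ∈ conicalShell (Ioo T (T + π / ω)) Ω := by
  obtain ⟨hx0, ht, hθ⟩ := hx
  have hradial := left_ne_zero_of_mul hpos.ne'
  refine ⟨hx0, ⟨ht.1.lt_of_ne fun h => ?_, ht.2.lt_of_ne fun h => ?_⟩, ?_⟩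
  · exact hradial (radialProfile_eq_zero hω (.inl h.symm))
  · exact hradial (radialProfile_eq_zero hω (.inr h))
  · by_contra hθΩ
    exact right_ne_zero_of_mul hpos.ne' (hφ _ ⟨hθ, hθΩ⟩)

lemma isCompact_conicalShell_Icc_closure (hΩ : Ω ⊆ Metric.sphere 0 1) (a b : ℝ) :
    IsCompact (conicalShell (Icc a b) (closure Ω)) := by
  have hclosure : closure Ω ⊆ Metric.sphere 0 1 := closure_minimal hΩ Metric.isClosed_sphere
  exact isCompact_conicalShell isCompact_Icc
    ((isCompact_sphere 0 1).of_isClosed_subset isClosed_closure hclosure) hclosure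

lemma isCompact_setOf_le_hardyMode (hΩ : Ω ⊆ Metric.sphere 0 1) (hφ : ContinuousOn φ (closure Ω))
    (hφ0 : ∀ θ ∈ closure Ω \ Ω, φ θ = 0) (hω : ω ≠ 0) {ε : ℝ} (hε : 0 < ε) :
    IsCompact {x ∈ conicalShell (Ioo T (T + π / ω)) Ω | ε ≤ hardyMode N φ ω T x} := by
  have hcompact := isCompact_conicalShell_Icc_closure hΩ T (T + π / ω)
  have hclosed := (continuousOn_hardyMode (ω := ω) (T := T) hφ).preimage_isClosed_of_isClosed
    hcompact.isClosed (isClosed_Ici (a := ε))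
  convert hcompact.of_isClosed_subset hclosed inter_subset_left using 1
  refine Subset.antisymm (fun x hx => ⟨?_, hx.2⟩) fun x hx =>
    ⟨mem_conicalShell_of_hardyMode_pos hφ0 hω hx.1 (hε.trans_le hx.2), hx.2⟩
  exact ⟨hx.1.1, Ioo_subset_Icc_self hx.1.2.1, subset_closure hx.1.2.2⟩

lemma integrableOn_inv_norm_sq_mul_hardyMode (hΩ : Ω ⊆ Metric.sphere 0 1)
    (hφ : ContinuousOn φ (closure Ω)) (a b : ℝ) :
    IntegrableOn (fun x => (‖x‖ ^ 2)⁻¹ * hardyMode N φ ω T x) (conicalShell (Ioo a b) Ω) := by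
  have hweight : ContinuousOn (fun x : Euc N => (‖x‖ ^ 2)⁻¹)
      (conicalShell (Icc a b) (closure Ω)) :=
    (continuousOn_id.norm.pow 2).inv₀ fun x hx => pow_ne_zero 2 (norm_ne_zero_iff.2 hx.1)
  exact ((hweight.mul (continuousOn_hardyMode hφ)).integrableOn_compact
    (isCompact_conicalShell_Icc_closure hΩ a b)).mono_set fun x hx =>
      ⟨hx.1, Ioo_subset_Icc_self hx.2.1, subset_closure hx.2.2⟩

end HardyMode

lemma le_CHconst_add_sq {N : ℕ} {Ω : Set (Euc N)} {lam1 : ℝ} {φ : Euc N → ℝ} {ρ μ ω : ℝ}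
    {v : Euc N → ℝ} (hΩS : Ω ⊆ Metric.sphere 0 1) (hΩne : Ω.Nonempty)
    (hΩ : IsOpen {θ : Metric.sphere (0 : Euc N) 1 | (θ : Euc N) ∈ Ω})
    (hφ : DirichletEigenpair N Ω lam1 φ) (hv : ContDiffOn ℝ 2 v (coneGT N ρ Ω))
    (hv0 : ∀ x ∈ coneGT N ρ Ω, 0 < v x)
    (hsuper : ∀ x ∈ coneGT N ρ Ω, μ * ‖x‖ ^ (-(2 : ℝ)) * v x ≤ -lap N v x) (hω : 0 < ω) :
    μ ≤ CHconst N lam1 + ω ^ 2 := by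
  let D := conicalShell (Ioo ρ (ρ + π / ω)) Ω
  have hDcone : D ⊆ cone N Ω := conicalShell_subset_cone
  have hDρ : D ⊆ coneGT N ρ Ω := conicalShell_Ioo_subset_coneGT
  have hD0 : ∀ x ∈ D, ‖x‖ ^ 2 ≠ 0 := fun x hx => pow_ne_zero 2 (norm_ne_zero_iff.2 hx.1)
  have hDne : D.Nonempty := by
    obtain ⟨θ, hθ⟩ := hΩne
    obtain ⟨t, ht⟩ := nonempty_Ioo.2 (lt_add_of_pos_right ρ (div_pos pi_pos hω))
    exact ⟨_, exp_smul_mem_conicalShell (mem_sphere_zero_iff_norm.1 (hΩS hθ)) ht hθ⟩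
  refine le_of_pos_supersolution (V := fun x => (‖x‖ ^ 2)⁻¹) (isOpen_conicalShell isOpen_Ioo hΩ)
    hDne ((contDiffOn_hardyMode hφ.smoothExt).mono hDcone)
    (fun x hx => hardyMode_pos hφ.pos hω hx)
    (fun ε hε => isCompact_setOf_le_hardyMode hΩS hφ.contOn hφ.bdryZero hω.ne' hε)
    ((continuousOn_id.norm.pow 2).inv₀ hD0) (fun x hx => ?_)
    (integrableOn_inv_norm_sq_mul_hardyMode hΩS hφ.contOn _ _)
    (fun x hx => (neg_laplacian_hardyMode hφ (isOpen_cone hΩ) (hDcone hx)).le)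
    (hv.mono hDρ) (fun x hx => hv0 x (hDρ hx)) fun x hx => ?_
  · have := hD0 x hx
    positivity
  · simpa only [rpow_neg_two, lap_eq_laplacian] using hsuper x (hDρ hx)

theorem system_no_solution_of_mu_gt_hardy_general {N : ℕ} {Ω : Set (Euc N)} {lam1 : ℝ}
    {φ : Euc N → ℝ} {ρ μ : ℝ} (hΩS : Ω ⊆ Metric.sphere 0 1) (hΩne : Ω.Nonempty)
    (hΩ : IsOpen {θ : Metric.sphere (0 : Euc N) 1 | (θ : Euc N) ∈ Ω})
    (hφ : DirichletEigenpair N Ω lam1 φ) (hμ : CHconst N lam1 < μ) :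
    ¬ ∃ v : Euc N → ℝ, ContDiffOn ℝ 2 v (coneGT N ρ Ω) ∧ (∀ x ∈ coneGT N ρ Ω, 0 < v x) ∧
      ∀ x ∈ coneGT N ρ Ω, μ * ‖x‖ ^ (-(2 : ℝ)) * v x ≤ -lap N v x := by
  rintro ⟨v, hv, hv0, hsuper⟩
  refine hμ.not_ge (le_of_forall_pos_le_add fun ε hε => ?_)
  simpa only [sq_sqrt hε.le] using
    le_CHconst_add_sq hΩS hΩne hΩ hφ hv hv0 hsuper (sqrt_pos.2 hε)

/-- if `μ > C_{H,Ω}` then the system `(S)` has no positive solution in `C_Ω^ρ`. -/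
theorem system_no_solution_of_mu_gt_hardy
    (N : ℕ) (hN : 2 ≤ N) (Ω : Set (Euc N)) (hΩ : IsConeDomain N Ω)
    (lam1 : ℝ) (φ : Euc N → ℝ) (hphi : DirichletEigenpair N Ω lam1 φ)
    (α p q s ρ μ : ℝ) (hα : 0 ≤ α) (hαN : α < N) (hp : 0 < p) (hq : 0 < q) (hs : 1 < s)
    (hρ : 0 < ρ) (hμ : CHconst N lam1 < μ) :
    ¬ ∃ u v : Euc N → ℝ, IsPosSolS N ρ μ α p q s Ω u v := by
  rintro ⟨u, v, -, -, hv, -, hu0, hv0, -, -, hsystem⟩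
  refine system_no_solution_of_mu_gt_hardy_general (ρ := ρ) hΩ.1 hΩ.2.1.nonempty hΩ.2.2 hphi hμ
    ⟨v, hv, hv0, fun x hx => ?_⟩
  linarith [hsystem x hx, rpow_nonneg (hu0 x hx).le s]
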